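/- arXiv:1604.04719 — 2 statements merged into one kernel-verified Lean document; each statement's English description precedes it below -/
import Mathlib

section
/- Let n > n₁ ≥ 2 and m > m₁ ≥ 2 be integers with F_n - F_{n₁} = T_m - T_{m₁}. Then α^{n-4} < α_T^{m-1} and α^{n-1} > 2.83·α_T^{m-5}, where α = (1+√5)/2 and α_T is the unique real root of x³ - x² - x - 1. -/
/-- The Tribonacci sequence: T 0 = 0, T 1 = T 2 = 1,
    T (k+3) = T (k+2) + T (k+1) + T k. -/
def trib : ℕ → ℤ
  | 0 => 0
  | 1 => 1
  | 2 => 1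
  | n + 3 => trib (n + 2) + trib (n + 1) + trib n

/-!
Write `φ` for the golden ratio, `ψ` for its conjugate and `β` for the tribonacci constant. Then
`φ ^ k = F (k + 1) - ψ F k` with `-1 < ψ < 0`, and
`β ^ (k + 3) = T (k + 2) β ^ 2 + (T (k + 1) + T k) β + T (k + 1)`.
The first expansion gives `F (k + 1) ≤ φ ^ k ≤ F (k + 2)`; the second gives `T k < β ^ (k - 1)` and
`(β + 1) β ^ (k - 5) ≤ T k - T (k - 1)`, where `β + 1 > 2.83`. Since `F` and `T` are monotone, the
common value `N` of the two differences satisfies `F (n - 2) ≤ N ≤ F n` and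
`T m - T (m - 1) ≤ N ≤ T m`. Small indices are immediate.
-/

open Real
open scoped goldenRatio

theorem fib_succ_le_goldenRatio_pow (k : ℕ) : (Nat.fib (k + 1) : ℝ) ≤ φ ^ k := by
  rw [← fib_succ_sub_goldenConj_mul_fib]
  linarith [mul_nonpos_of_nonpos_of_nonneg goldenConj_neg.le (Nat.cast_nonneg (Nat.fib k))]

theorem goldenRatio_pow_le_fib_add_two (k : ℕ) : φ ^ k ≤ (Nat.fib (k + 2) : ℝ) := by
  rw [← fib_succ_sub_goldenConj_mul_fib, Nat.fib_add_two]
  push_cast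
  linarith [mul_le_mul_of_nonneg_right neg_one_lt_goldenConj.le
    (Nat.cast_nonneg (α := ℝ) (Nat.fib k))]

theorem goldenRatio_pow_le_fib_sub_fib {k n₁ : ℕ} (hn : n₁ ≤ k + 3) :
    φ ^ k ≤ (Nat.fib (k + 4) : ℝ) - Nat.fib n₁ := by
  have hmono : (Nat.fib n₁ : ℝ) ≤ Nat.fib (k + 3) := mod_cast Nat.fib_mono hn
  have hrec : (Nat.fib (k + 4) : ℝ) = Nat.fib (k + 2) + Nat.fib (k + 3) := mod_cast Nat.fib_add_two
  linarith [goldenRatio_pow_le_fib_add_two k]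

theorem trib_add_three (k : ℕ) : trib (k + 3) = trib (k + 2) + trib (k + 1) + trib k := rfl

theorem trib_nonneg : ∀ k, 0 ≤ trib k
  | 0 | 1 | 2 => by decide
  | k + 3 => by
    rw [trib_add_three]
    linarith [trib_nonneg k, trib_nonneg (k + 1), trib_nonneg (k + 2)]

theorem trib_mono : Monotone trib :=
  monotone_nat_of_le_succ fun
    | 0 | 1 => by decide
    | k + 2 => by linarith [trib_add_three k, trib_nonneg k, trib_nonneg (k + 1)]

theorem trib_succ_pos (k : ℕ) : 0 < trib (k + 1) :=
  zero_lt_one.trans_le (trib_mono (Nat.le_add_left 1 k))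

theorem pow_add_three_eq_trib {R : Type*} [CommRing R] {β : R} (hβ : β ^ 3 = β ^ 2 + β + 1)
    (k : ℕ) :
    β ^ (k + 3) = trib (k + 2) * β ^ 2 + (trib (k + 1) + trib k) * β + trib (k + 1) := by
  induction k with
  | zero => simp [trib, hβ]
  | succ k ih =>
    rw [trib_add_three k]
    push_cast
    linear_combination β * ih + (trib (k + 2) : R) * hβ

section TribonacciConstant

variable {β : ℝ}

theorem lt_of_tribonacci_root (hβ : β ^ 3 = β ^ 2 + β + 1) : 1.83 < β := by
  have hfactor : (β - 1.83) * (β ^ 2 + 0.83 * β + 0.5189) = 0.050413 := by linear_combination hβ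
  have hquad : 0 < β ^ 2 + 0.83 * β + 0.5189 := by nlinarith [sq_nonneg (β + 0.415)]
  exact sub_pos.mp (pos_of_mul_pos_left (hfactor ▸ by norm_num) hquad.le)

theorem trib_add_two_lt_pow (hβ : β ^ 3 = β ^ 2 + β + 1) (k : ℕ) :
    (trib (k + 2) : ℝ) < β ^ (k + 1) := by
  have hβ_pos : 0 < β := by linarith [lt_of_tribonacci_root hβ]
  have hT₀ : (0 : ℝ) ≤ trib k := mod_cast trib_nonneg k
  have hT₁ : (0 : ℝ) < trib (k + 1) := mod_cast trib_succ_pos k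
  refine lt_of_mul_lt_mul_right ?_ (sq_nonneg β)
  calc (trib (k + 2) : ℝ) * β ^ 2
      < trib (k + 2) * β ^ 2 + ((trib (k + 1) + trib k) * β + trib (k + 1)) :=
        lt_add_of_pos_right _ (by positivity)
    _ = β ^ (k + 1) * β ^ 2 := by rw [← add_assoc, ← pow_add_three_eq_trib hβ, ← pow_add]

theorem add_one_mul_pow_le_mul_trib_sub (hβ : β ^ 3 = β ^ 2 + β + 1) (k : ℕ) :
    (β + 1) * β ^ k ≤ β * (trib (k + 4) - trib (k + 3)) := by
  have hβ_pos : 0 < β := by linarith [lt_of_tribonacci_root hβ]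
  have hle₁ : (trib k : ℝ) ≤ trib (k + 1) := mod_cast trib_mono (by omega)
  have hle₂ : (trib k : ℝ) ≤ trib (k + 2) := mod_cast trib_mono (by omega)
  have hrec : (trib (k + 4) : ℝ) = trib (k + 3) + trib (k + 2) + trib (k + 1) :=
    mod_cast trib_add_three (k + 1)
  have hexpand : β ^ 3 * (β * (trib (k + 4) - trib (k + 3)) - (β + 1) * β ^ k) =
      (trib (k + 1) - trib k) * β ^ 2 + (trib (k + 2) - trib k) * β := by
    rw [hrec]
    linear_combination -(β + 1) * pow_add_three_eq_trib hβ k +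
      (trib (k + 1) + β * (trib (k + 2) + trib (k + 1))) * hβ
  refine sub_nonneg.mp (nonneg_of_mul_nonneg_right (hexpand ▸ ?_) (pow_pos hβ_pos 3))
  exact add_nonneg (mul_nonneg (sub_nonneg.mpr hle₁) (sq_nonneg β))
    (mul_nonneg (sub_nonneg.mpr hle₂) hβ_pos.le)

theorem goldenRatio_zpow_lt_zpow_of_fib_sub_le_trib_sub
    (hβ : β ^ 3 = β ^ 2 + β + 1) {n m n₁ m₁ : ℕ} (hn : n₁ < n) (hm : 2 ≤ m)
    (h : (Nat.fib n : ℤ) - Nat.fib n₁ ≤ trib m - trib m₁) :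
    φ ^ ((n : ℤ) - 4) < β ^ ((m : ℤ) - 1) := by
  have hβ_one : 1 < β := by linarith [lt_of_tribonacci_root hβ]
  rcases lt_or_ge n 4 with hn_small | hn_large
  · exact (zpow_le_one_of_nonpos₀ one_lt_goldenRatio.le (by omega)).trans_lt
      (one_lt_zpow₀ hβ_one (by omega))
  · obtain ⟨k, rfl⟩ := Nat.exists_eq_add_of_le' hn_large
    obtain ⟨j, rfl⟩ := Nat.exists_eq_add_of_le' hm
    calc φ ^ (((k + 4 : ℕ) : ℤ) - 4)
        = φ ^ k := by simp
      _ ≤ (Nat.fib (k + 4) : ℝ) - Nat.fib n₁ := goldenRatio_pow_le_fib_sub_fib (by omega)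
      _ ≤ trib (j + 2) - trib m₁ := mod_cast h
      _ ≤ trib (j + 2) := sub_le_self _ (mod_cast trib_nonneg m₁)
      _ < β ^ (j + 1) := trib_add_two_lt_pow hβ j
      _ = β ^ (((j + 2 : ℕ) : ℤ) - 1) := by
        rw [← zpow_natCast]
        congr 1
        omega

theorem mul_zpow_lt_goldenRatio_zpow_of_trib_sub_le_fib_sub
    (hβ : β ^ 3 = β ^ 2 + β + 1) {n m n₁ m₁ : ℕ} (hn : 1 ≤ n) (hm : m₁ < m)
    (h : trib m - trib m₁ ≤ (Nat.fib n : ℤ) - Nat.fib n₁) :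
    2.83 * β ^ ((m : ℤ) - 5) < φ ^ ((n : ℤ) - 1) := by
  have hβ_lt : 1.83 < β := lt_of_tribonacci_root hβ
  have hβ_pos : 0 < β := by linarith
  rcases lt_or_ge m 4 with hm_small | hm_large
  · calc 2.83 * β ^ ((m : ℤ) - 5)
        ≤ 2.83 * β ^ (-2 : ℤ) := by
          gcongr
          · linarith
          · omega
      _ < 1 := by
        rw [zpow_neg, ← div_eq_mul_inv, div_lt_one (by positivity)]
        have hβ_sq : 2.83 < β ^ 2 := by nlinarith
        exact hβ_sq
      _ ≤ φ ^ ((n : ℤ) - 1) := one_le_zpow₀ one_lt_goldenRatio.le (by omega)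
  · obtain ⟨k, rfl⟩ := Nat.exists_eq_add_of_le' hm_large
    obtain ⟨i, rfl⟩ := Nat.exists_eq_add_of_le' hn
    calc 2.83 * β ^ (((k + 4 : ℕ) : ℤ) - 5)
        < (β + 1) * β ^ (((k + 4 : ℕ) : ℤ) - 5) := by
          gcongr
          linarith
      _ = (β + 1) * β ^ k / β := by
        rw [mul_div_assoc, div_eq_mul_inv, ← zpow_natCast, ← zpow_sub_one₀ hβ_pos.ne']
        congr 2
        omega
      _ ≤ trib (k + 4) - trib (k + 3) :=
        (div_le_iff₀' hβ_pos).mpr (add_one_mul_pow_le_mul_trib_sub hβ k)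
      _ ≤ trib (k + 4) - trib m₁ := sub_le_sub_left (mod_cast trib_mono (by omega)) _
      _ ≤ (Nat.fib (i + 1) : ℝ) - Nat.fib n₁ := mod_cast h
      _ ≤ Nat.fib (i + 1) := sub_le_self _ (Nat.cast_nonneg _)
      _ ≤ φ ^ i := fib_succ_le_goldenRatio_pow i
      _ = φ ^ (((i + 1 : ℕ) : ℤ) - 1) := by simp

end TribonacciConstant

theorem fib_trib_exponent_inequalities_general {β : ℝ} (hroot : β ^ 3 - β ^ 2 - β - 1 = 0)
    {n m n₁ m₁ : ℕ} (hn : n₁ < n) (hm : m₁ < m) (hm_two : 2 ≤ m)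
    (h : (Nat.fib n : ℤ) - Nat.fib n₁ = trib m - trib m₁) :
    φ ^ ((n : ℤ) - 4) < β ^ ((m : ℤ) - 1) ∧
      2.83 * β ^ ((m : ℤ) - 5) < φ ^ ((n : ℤ) - 1) := by
  have hβ : β ^ 3 = β ^ 2 + β + 1 := by linear_combination hroot
  exact ⟨goldenRatio_zpow_lt_zpow_of_fib_sub_le_trib_sub hβ hn hm_two h.le,
    mul_zpow_lt_goldenRatio_zpow_of_trib_sub_le_fib_sub hβ (by omega) hm h.ge⟩

/-- If `n > n₁ ≥ 2`, `m > m₁ ≥ 2` and `F n - F n₁ = T m - T m₁`, then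
`α ^ (n - 4) < α_T ^ (m - 1)` and `α ^ (n - 1) > 2.83 · α_T ^ (m - 5)`. -/
theorem fib_trib_exponent_inequalities (α αT : ℝ)
    (hα : α = (1 + Real.sqrt 5) / 2)
    (hroot : αT ^ 3 - αT ^ 2 - αT - 1 = 0)
    (huniq : ∀ x : ℝ, x ^ 3 - x ^ 2 - x - 1 = 0 → x = αT)
    (n m n₁ m₁ : ℕ) (hn₁ : 2 ≤ n₁) (hn : n₁ < n) (hm₁ : 2 ≤ m₁) (hm : m₁ < m)
    (h : (Nat.fib n : ℤ) - Nat.fib n₁ = trib m - trib m₁) :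
    α ^ ((n : ℤ) - 4) < αT ^ ((m : ℤ) - 1) ∧
      2.83 * αT ^ ((m : ℤ) - 5) < α ^ ((n : ℤ) - 1) := by
  subst hα
  exact fib_trib_exponent_inequalities_general hroot hn hm (by omega) h
end

section
/- Let n > n₁ ≥ 2 and m > m₁ ≥ 2 be integers with F_n - F_{n₁} = T_m - T_{m₁}. Then |(√5·c_α)^{-1}·α^n·α_T^{-m} - 1| < max{α^{n₁-n+5}, α_T^{m₁-m+2}}, where α = (1+√5)/2, α_T is the unique real root of x³ - x² - x - 1, and c_α = 1/(-α_T² + 4α_T - 1). -/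
section QuadraticForm

variable {R : Type*} [CommRing R] {p q : R} {u : ℕ → R}

theorem quadraticForm_eq_pow_mul_of_recurrence
    (hu : ∀ k, u (k + 2) + p * u (k + 1) + q * u k = 0) (k : ℕ) :
    u (k + 1) ^ 2 + p * u (k + 1) * u k + q * u k ^ 2 =
      q ^ k * (u 1 ^ 2 + p * u 1 * u 0 + q * u 0 ^ 2) := by
  induction k with
  | zero => ring
  | succ k ih => linear_combination q * ih + (u (k + 2) - q * u k) * hu k

theorem four_mul_sub_sq_mul_sq_le_of_recurrence [LinearOrder R] [IsStrictOrderedRing R]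
    (hu : ∀ k, u (k + 2) + p * u (k + 1) + q * u k = 0) (k : ℕ) :
    (4 * q - p ^ 2) * u k ^ 2 ≤ 4 * (q ^ k * (u 1 ^ 2 + p * u 1 * u 0 + q * u 0 ^ 2)) := by
  rw [← quadraticForm_eq_pow_mul_of_recurrence hu k]
  linear_combination sq_nonneg (2 * u (k + 1) + p * u k)

end QuadraticForm

theorem trib_add_two_add_mul_add_mul {R : Type*} [CommRing R] {τ : R}
    (hτ : τ ^ 3 - τ ^ 2 - τ - 1 = 0) (k : ℕ) :
    (trib (k + 2) : R) + (τ - 1) * trib (k + 1) + (τ ^ 2 - τ - 1) * trib k = τ ^ (k + 1) := by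
  induction k with
  | zero => simp [trib]
  | succ k ih =>
    have trib_succ : trib (k + 3) = trib (k + 2) + trib (k + 1) + trib k := by rw [trib]
    rw [trib_succ]
    push_cast
    linear_combination τ * ih - (trib k : R) * hτ

/-- The coefficient `c_α` of `τ ^ k` in the Binet-type formula for the Tribonacci numbers, where
`τ` is the real root of `x ^ 3 - x ^ 2 - x - 1`. -/
noncomputable def tribCoeff (τ : ℝ) : ℝ :=
  1 / (-τ ^ 2 + 4 * τ - 1)

/-- The difference between `trib k` and its main term, that is, the contribution of the two complex
roots of `x ^ 3 - x ^ 2 - x - 1` to `trib k`. -/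
noncomputable def tribError (τ : ℝ) (k : ℕ) : ℝ :=
  trib k - tribCoeff τ * τ ^ k

theorem tribonacci_cubic_quotient_pos {a : ℝ} (ha : 5 / 3 < a) (x : ℝ) :
    0 < x ^ 2 + (a - 1) * x + (a ^ 2 - a - 1) := by
  nlinarith [sq_nonneg (2 * x + (a - 1))]

section TribonacciConstant

variable {τ : ℝ} (hτ : τ ^ 3 - τ ^ 2 - τ - 1 = 0)
include hτ

theorem lt_tribonacci_root : 1.839 < τ := by
  by_contra! hle
  have hquot := tribonacci_cubic_quotient_pos (a := 1.839) (by norm_num) τ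
  linarith [mul_nonneg (sub_nonneg.2 hle) hquot.le]

theorem tribonacci_root_lt : τ < 1.84 := by
  by_contra! hge
  have hquot := tribonacci_cubic_quotient_pos (a := 1.84) (by norm_num) τ
  linarith [mul_nonneg (sub_nonneg.2 hge) hquot.le]

theorem two_lt_tribCoeff_denom : 2 < -τ ^ 2 + 4 * τ - 1 := by
  nlinarith [lt_tribonacci_root hτ, tribonacci_root_lt hτ]

theorem tribCoeff_mul_denom : tribCoeff τ * (-τ ^ 2 + 4 * τ - 1) = 1 :=
  one_div_mul_cancel (by linarith [two_lt_tribCoeff_denom hτ])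

theorem tribCoeff_pos : 0 < tribCoeff τ :=
  one_div_pos.2 (by linarith [two_lt_tribCoeff_denom hτ])

theorem tribCoeff_lt_half : tribCoeff τ < 1 / 2 :=
  one_div_lt_one_div_of_lt two_pos (two_lt_tribCoeff_denom hτ)

theorem tribCoeff_mul_deriv : tribCoeff τ * (3 * τ ^ 2 - 2 * τ - 1) = τ := by
  linear_combination τ * tribCoeff_mul_denom hτ + tribCoeff τ * hτ

theorem ten_ninths_le_tribCoeff_mul_pow {k : ℕ} (hk : 2 ≤ k) : 10 / 9 ≤ tribCoeff τ * τ ^ k := by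
  have hlower := lt_tribonacci_root hτ
  have hsq : 10 / 9 ≤ tribCoeff τ * τ ^ 2 := by
    rw [tribCoeff, one_div_mul_eq_div, le_div_iff₀ (by linarith [two_lt_tribCoeff_denom hτ])]
    nlinarith
  have hpow : τ ^ 2 ≤ τ ^ k := pow_le_pow_right₀ (by linarith) hk
  exact hsq.trans (mul_le_mul_of_nonneg_left hpow (tribCoeff_pos hτ).le)

theorem tribError_recurrence (k : ℕ) :
    tribError τ (k + 2) + (τ - 1) * tribError τ (k + 1) + (τ ^ 2 - τ - 1) * tribError τ k = 0 := by
  simp only [tribError]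
  linear_combination trib_add_two_add_mul_add_mul hτ k - τ ^ k * tribCoeff_mul_deriv hτ

theorem tribError_quadraticForm_zero :
    tribError τ 1 ^ 2 + (τ - 1) * tribError τ 1 * tribError τ 0 +
      (τ ^ 2 - τ - 1) * tribError τ 0 ^ 2 = tribCoeff τ * (τ * (2 - τ)) := by
  simp only [tribError, trib, Int.cast_zero, Int.cast_one, pow_zero, pow_one]
  linear_combination tribCoeff τ * tribCoeff_mul_deriv hτ - tribCoeff_mul_denom hτ

theorem tribCoeff_mul_mul_two_sub_le_eighth : tribCoeff τ * (τ * (2 - τ)) ≤ 1 / 8 := by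
  rw [tribCoeff, one_div_mul_eq_div, div_le_iff₀ (by linarith [two_lt_tribCoeff_denom hτ])]
  nlinarith [lt_tribonacci_root hτ]

theorem abs_tribError_lt_half (k : ℕ) : |tribError τ k| < 1 / 2 := by
  rcases k with _ | k
  · simpa [tribError, trib, abs_of_pos (tribCoeff_pos hτ)] using tribCoeff_lt_half hτ
  · have hlower := lt_tribonacci_root hτ
    have hupper := tribonacci_root_lt hτ
    have hq_nonneg : 0 ≤ τ ^ 2 - τ - 1 := by nlinarith
    have hq_lt : τ ^ 2 - τ - 1 ≤ 0.55 := by nlinarith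
    have hq_pow : (τ ^ 2 - τ - 1) ^ (k + 1) ≤ 0.55 :=
      (pow_le_of_le_one hq_nonneg (by linarith) k.succ_ne_zero).trans hq_lt
    have hdiscrim : 1.4 ≤ 4 * (τ ^ 2 - τ - 1) - (τ - 1) ^ 2 := by nlinarith
    have hbound := four_mul_sub_sq_mul_sq_le_of_recurrence (tribError_recurrence hτ) (k + 1)
    rw [tribError_quadraticForm_zero hτ] at hbound
    have hinit_nonneg : 0 ≤ tribCoeff τ * (τ * (2 - τ)) :=
      mul_nonneg (tribCoeff_pos hτ).le (mul_nonneg (by linarith) (by linarith))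
    have hform : (τ ^ 2 - τ - 1) ^ (k + 1) * (tribCoeff τ * (τ * (2 - τ))) ≤ 0.55 * (1 / 8) :=
      mul_le_mul hq_pow (tribCoeff_mul_mul_two_sub_le_eighth hτ) hinit_nonneg (by norm_num)
    have hsq : tribError τ (k + 1) ^ 2 < (1 / 2) ^ 2 := by
      nlinarith [sq_nonneg (tribError τ (k + 1))]
    exact abs_lt_of_sq_lt_sq hsq (by norm_num)

end TribonacciConstant

section LinearForm

open Real goldenRatio

theorem two_lt_sqrt_five : 2 < √5 :=
  lt_sqrt_of_sq_lt (by norm_num)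

theorem abs_fib_sub_goldenRatio_pow_div_lt_half (n : ℕ) :
    |(Nat.fib n : ℝ) - φ ^ n / √5| < 1 / 2 := by
  have hψ : |ψ| ≤ 1 := abs_le.2 ⟨neg_one_lt_goldenConj.le, by linarith [goldenConj_neg]⟩
  calc |(Nat.fib n : ℝ) - φ ^ n / √5| = |ψ| ^ n / √5 := by
        rw [coe_fib_eq, sub_div, sub_sub_cancel_left, abs_neg, abs_div, abs_pow,
          abs_of_nonneg (sqrt_nonneg 5)]
    _ ≤ 1 / √5 := by gcongr; exact pow_le_one₀ (abs_nonneg ψ) hψ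
    _ < 1 / 2 := one_div_lt_one_div_of_lt two_pos two_lt_sqrt_five

theorem three_halves_lt_goldenRatio : 3 / 2 < φ := by
  rw [goldenRatio]
  linarith [two_lt_sqrt_five]

theorem goldenRatio_pow_four : φ ^ 4 = 3 * φ + 2 := by
  linear_combination (φ ^ 2 + φ + 2) * goldenRatio_sq

theorem goldenRatio_pow_five : φ ^ 5 = 5 * φ + 3 := by
  linear_combination (φ ^ 3 + φ ^ 2 + 2 * φ + 3) * goldenRatio_sq

theorem goldenRatio_pow_five_mul_le {A A₁ B : ℝ} (hA : 0 < A) (hB : B ≤ A) (hA₁ : φ * A₁ ≤ A)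
    (hle : A₁ / A * φ ^ 5 * B ≤ A - B) :
    φ ^ 5 * A₁ ≤ (φ ^ 4 + 1) * (A - B) := by
  have hclear : φ ^ 5 * A₁ * B ≤ (A - B) * A := by
    calc φ ^ 5 * A₁ * B = A₁ / A * φ ^ 5 * B * A := by field_simp
      _ ≤ (A - B) * A := by gcongr
  have hscale : φ ^ 4 * (A - B) * (φ * A₁) ≤ φ ^ 4 * (A - B) * A :=
    mul_le_mul_of_nonneg_left hA₁ (mul_nonneg (by positivity) (sub_nonneg.2 hB))
  refine le_of_mul_le_mul_right ?_ hA
  linear_combination hclear + hscale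

-- When `s = 3`, any constant below `1 + 6 / φ ^ 4 ≈ 1.87` could replace `9 / 5`; the choice `9 / 5`
-- matches `ten_ninths_le_tribCoeff_mul_pow`, as `2 = 9 / 5 * (10 / 9)`.
theorem abs_div_sub_one_lt_max {A A₁ B B₁ s : ℝ} (hA₁_pos : 0 < A₁) (hB : 0 < B) (hB₁ : 0 < B₁)
    (hA₁ : φ * A₁ ≤ A) (hs : 3 ≤ s) (hclose : |(A - A₁) - (B - B₁)| ≤ 9 / 5 * B₁) :
    |A / B - 1| < max (A₁ / A * φ ^ 5) (B₁ / B * s) := by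
  obtain ⟨hclose_lower, hclose_upper⟩ := abs_le.1 hclose
  have hA : 0 < A := (mul_pos goldenRatio_pos hA₁_pos).trans_le hA₁
  have hB₁_le : 3 * B₁ ≤ B₁ * s := by linear_combination B₁ * hs
  have hclear : B₁ / B * s * B = B₁ * s := by field_simp
  rw [div_sub_one hB.ne', abs_div, abs_of_pos hB, div_lt_iff₀ hB, max_mul_of_nonneg _ _ hB.le,
    hclear, abs_sub_lt_iff]
  constructor
  · by_contra! hmax
    obtain ⟨hleft, hright⟩ := max_le_iff.1 hmax
    have hA₁_le : φ ^ 5 * A₁ ≤ (φ ^ 4 + 1) * (A - B) :=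
      goldenRatio_pow_five_mul_le hA (by linarith) hA₁ hleft
    have hA₁_ge : 11 / 15 * (A - B) ≤ A₁ := by linarith
    have hpow_lt : φ ^ 4 + 1 < φ ^ 5 * (11 / 15) := by
      rw [goldenRatio_pow_four, goldenRatio_pow_five]
      linarith [three_halves_lt_goldenRatio]
    have hdiff_pos : 0 < A - B := by linarith
    refine hA₁_le.not_gt ?_
    calc (φ ^ 4 + 1) * (A - B) < φ ^ 5 * (11 / 15) * (A - B) := by gcongr
      _ = φ ^ 5 * (11 / 15 * (A - B)) := mul_assoc ..
      _ ≤ φ ^ 5 * A₁ := by gcongr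
  · exact lt_max_of_lt_right (by linarith)

theorem zpow_natCast_sub_natCast_add_natCast {G₀ : Type*} [GroupWithZero G₀] {x : G₀} (hx : x ≠ 0)
    (k n j : ℕ) : x ^ ((k : ℤ) - n + j) = x ^ k / x ^ n * x ^ j := by
  simp only [zpow_add₀ hx, zpow_sub₀ hx, zpow_natCast]

theorem abs_fib_mainTerm_sub_trib_mainTerm_lt_two {τ : ℝ}
    (hτ : τ ^ 3 - τ ^ 2 - τ - 1 = 0) {n m n₁ m₁ : ℕ}
    (h : (Nat.fib n : ℤ) - Nat.fib n₁ = trib m - trib m₁) :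
    |(φ ^ n / √5 - φ ^ n₁ / √5) - (tribCoeff τ * τ ^ m - tribCoeff τ * τ ^ m₁)| < 2 := by
  have hreal : (Nat.fib n : ℝ) - Nat.fib n₁ = trib m - trib m₁ := by exact_mod_cast h
  have hn := abs_lt.1 (abs_fib_sub_goldenRatio_pow_div_lt_half n)
  have hn₁ := abs_lt.1 (abs_fib_sub_goldenRatio_pow_div_lt_half n₁)
  have hm := abs_lt.1 (abs_tribError_lt_half hτ m)
  have hm₁ := abs_lt.1 (abs_tribError_lt_half hτ m₁)
  simp only [tribError] at hm hm₁
  rw [abs_lt]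
  constructor <;> linarith

theorem fib_trib_linear_form_zero_general {α αT cα : ℝ}
    (hα : α = (1 + √5) / 2)
    (hroot : αT ^ 3 - αT ^ 2 - αT - 1 = 0)
    (hcα : cα = 1 / (-αT ^ 2 + 4 * αT - 1))
    {n m n₁ m₁ : ℕ} (hn : n₁ < n) (hm₁ : 2 ≤ m₁)
    (h : (Nat.fib n : ℤ) - Nat.fib n₁ = trib m - trib m₁) :
    |(√5 * cα)⁻¹ * α ^ n * αT ^ (-(m : ℤ)) - 1| <
      max (α ^ ((n₁ : ℤ) - n + 5)) (αT ^ ((m₁ : ℤ) - m + 2)) := by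
  obtain rfl : α = φ := hα
  obtain rfl : cα = tribCoeff αT := hcα
  have hαT := lt_tribonacci_root hroot
  have hαT_pos : 0 < αT := by linarith
  have hc := tribCoeff_pos hroot
  have hmain : (√5 * tribCoeff αT)⁻¹ * φ ^ n * αT ^ (-(m : ℤ)) =
      (φ ^ n / √5) / (tribCoeff αT * αT ^ m) := by
    rw [zpow_neg, zpow_natCast]
    field_simp
  have hFib : φ ^ ((n₁ : ℤ) - n + 5) = (φ ^ n₁ / √5) / (φ ^ n / √5) * φ ^ 5 := by
    rw [div_div_div_cancel_right₀ (by positivity)]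
    exact zpow_natCast_sub_natCast_add_natCast goldenRatio_ne_zero n₁ n 5
  have hTrib : αT ^ ((m₁ : ℤ) - m + 2) =
      (tribCoeff αT * αT ^ m₁) / (tribCoeff αT * αT ^ m) * αT ^ 2 := by
    rw [mul_div_mul_left _ _ hc.ne']
    exact zpow_natCast_sub_natCast_add_natCast hαT_pos.ne' m₁ m 2
  have hratio : φ * (φ ^ n₁ / √5) ≤ φ ^ n / √5 := by
    rw [← mul_div_assoc, ← pow_succ']
    gcongr
    exacts [one_lt_goldenRatio.le, hn]
  rw [hmain, hFib, hTrib]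
  refine abs_div_sub_one_lt_max (by positivity) (by positivity) (by positivity) hratio
    (by nlinarith) ?_
  linarith [abs_fib_mainTerm_sub_trib_mainTerm_lt_two hroot h,
    ten_ninths_le_tribCoeff_mul_pow hroot hm₁]

end LinearForm

/-- If `n > n₁ ≥ 2`, `m > m₁ ≥ 2` and `F n - F n₁ = T m - T m₁`, then
`|(√5·c_α)⁻¹·α^n·α_T^(-m) - 1| < max {α^(n₁-n+5), α_T^(m₁-m+2)}`. -/
theorem fib_trib_linear_form_zero (α αT cα : ℝ)
    (hα : α = (1 + Real.sqrt 5) / 2)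
    (hroot : αT ^ 3 - αT ^ 2 - αT - 1 = 0)
    (huniq : ∀ x : ℝ, x ^ 3 - x ^ 2 - x - 1 = 0 → x = αT)
    (hcα : cα = 1 / (-αT ^ 2 + 4 * αT - 1))
    (n m n₁ m₁ : ℕ) (hn₁ : 2 ≤ n₁) (hn : n₁ < n) (hm₁ : 2 ≤ m₁) (hm : m₁ < m)
    (h : (Nat.fib n : ℤ) - Nat.fib n₁ = trib m - trib m₁) :
    |(Real.sqrt 5 * cα)⁻¹ * α ^ n * αT ^ (-(m : ℤ)) - 1| <
      max (α ^ ((n₁ : ℤ) - n + 5)) (αT ^ ((m₁ : ℤ) - m + 2)) :=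
  fib_trib_linear_form_zero_general hα hroot hcα hn hm₁ h
end
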